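/- Let (Σ, 𝓢, ν) be a standard Borel probability space and S : Σ → Σ an invertible bimeasurable ν-preserving transformation which is aperiodic, i.e. for every integer n ≠ 0, ν({ω ∈ Σ : S^n ω = ω}) = 0. Then for every ε > 0, every N ∈ ℕ and every x ∈ (0,1) there exists a measurable set A ∈ 𝓢 with ν(A) = x and ν(A Δ S^{-n}A) < ε·ν(A) for every integer 0 ≤ n ≤ N. -/

import Mathlib

open MeasureTheory Set

/-- The `k`-th iterate (for `k : ℤ`) of an invertible transformation. -/
noncomputable def iterZ {α : Type*} [MeasurableSpace α] (S : α ≃ᵐ α) : ℤ → α → α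
  | Int.ofNat n => (⇑S)^[n]
  | Int.negSucc n => (⇑S.symm)^[n + 1]

/-!
Put `A = C ∪ f⁻¹ C ∪ ⋯ ∪ f⁻ⁿ C`. A point of `f⁻¹ A` outside `A` enters `C` for the first time at
time `n + 1`. As `f` preserves `ν`, the first entrance at time `k` has a probability decreasing
in `k`, and for `k ≤ n` these probabilities add up to `ν A`; hence `f⁻¹ A \ A` has measure at most
`ν A / (n + 1)`, whatever `C` is. It remains to choose `C` with `ν A = x`. Take an injective
measurable `e : α → ℝ` and `C = {e ≤ c}`: then `A = {min_{k ≤ n} e ∘ f ^ k ≤ c}`, and the law of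
this minimum has no point masses because `ν` has none, so `ν A` depends continuously on `c`.
By Poincaré recurrence an atom of `ν` would be a periodic point, so aperiodicity rules atoms out.
-/

section HittingTimes

variable {α : Type*} {f : α → α}

/-- The set of points whose orbit under `f` hits `C` at some time in `{0, …, n}`, i.e. the union
of the preimages of `C` under the first `n + 1` iterates. These are the almost invariant sets of
the theorem. -/
def hitBy (f : α → α) (C : Set α) (n : ℕ) : Set α :=
  accumulate (fun k => f^[k] ⁻¹' C) n

/-- The set of points whose orbit under `f` hits `C` at time `n` and not before; it measures the
growth of `hitBy f C`. -/
def firstHitAt (f : α → α) (C : Set α) (n : ℕ) : Set α :=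
  disjointed (fun k => f^[k] ⁻¹' C) n

theorem mem_firstHitAt {C : Set α} {n : ℕ} {ω : α} :
    ω ∈ firstHitAt f C n ↔ f^[n] ω ∈ C ∧ ∀ k < n, f^[k] ω ∉ C := by
  simp [firstHitAt, disjointed_apply, Finset.sup_set_eq_biUnion]

theorem preimage_hitBy_diff_subset (f : α → α) (C : Set α) (n : ℕ) :
    f ⁻¹' hitBy f C n \ hitBy f C n ⊆ firstHitAt f C (n + 1) := by
  simp only [hitBy]
  rintro ω ⟨hω, hnot⟩
  simp only [mem_preimage, mem_accumulate, not_exists, not_and] at hω hnot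
  obtain ⟨k, hkn, hk⟩ := hω
  obtain rfl : k = n := by
    by_contra hne
    exact hnot (k + 1) (by lia) hk
  exact mem_firstHitAt.2 ⟨hk, fun j hj => hnot j (by lia)⟩

end HittingTimes

section PointMasses

open ProbabilityTheory

variable {α β : Type*} [MeasurableSpace α] [MeasurableSpace β] {ν : Measure α}

theorem continuous_cdf (μ : Measure ℝ) [IsProbabilityMeasure μ] [NullSingletonClass μ] :
    Continuous (cdf μ) := by
  refine continuous_iff_continuousAt.2 fun a => ?_
  have hmono := monotone_cdf μ
  rw [hmono.continuousAt_iff_leftLim_eq_rightLim, StieltjesFunction.rightLim_eq]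
  refine le_antisymm (hmono.leftLim_le le_rfl) ?_
  have hjump : ENNReal.ofReal (cdf μ a - Function.leftLim (cdf μ) a) = 0 := by
    rw [← StieltjesFunction.measure_singleton, measure_cdf, measure_singleton]
  exact sub_nonpos.1 (ENNReal.ofReal_eq_zero.1 hjump)

theorem exists_measure_Iic_eq (μ : Measure ℝ) [IsProbabilityMeasure μ] [NullSingletonClass μ]
    {x : ℝ} (hx : x ∈ Ioo (0 : ℝ) 1) : ∃ c, μ (Iic c) = ENNReal.ofReal x := by
  obtain ⟨c, hc⟩ : x ∈ range (cdf μ) :=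
    mem_range_of_exists_le_of_exists_ge (continuous_cdf μ)
      ((tendsto_cdf_atBot μ).eventually_le_const hx.1).exists
      ((tendsto_cdf_atTop μ).eventually_const_le hx.2).exists
  exact ⟨c, by rw [← ofReal_cdf, hc]⟩

theorem nullSingletonClass_map_of_injective [MeasurableSingletonClass β] [NullSingletonClass ν]
    {e : α → β} (he : Measurable e) (hinj : Function.Injective e) :
    NullSingletonClass (ν.map e) where
  measure_singleton b := by
    rw [Measure.map_apply he (measurableSet_singleton b)]
    exact (subsingleton_singleton.preimage hinj).measure_zero ν

theorem measurable_finset_inf' [SemilatticeInf β] [MeasurableInf₂ β] {ι : Type*} {s : Finset ι}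
    (hs : s.Nonempty) {g : ι → α → β} (hg : ∀ i ∈ s, Measurable (g i)) : Measurable (s.inf' hs g) :=
  Finset.inf'_induction hs g (fun _ h₁ _ h₂ => h₁.inf h₂) hg

theorem nullSingletonClass_map_inf' [LinearOrder β] [MeasurableInf₂ β]
    [MeasurableSingletonClass β] {ι : Type*} {s : Finset ι} (hs : s.Nonempty) {g : ι → α → β}
    (hg : ∀ i ∈ s, Measurable (g i))
    (hnull : ∀ i ∈ s, NullSingletonClass (ν.map (g i))) :
    NullSingletonClass (ν.map (s.inf' hs g)) where
  measure_singleton b := by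
    rw [Measure.map_apply (measurable_finset_inf' hs hg) (measurableSet_singleton b)]
    have hsub : s.inf' hs g ⁻¹' {b} ⊆ ⋃ i ∈ s, g i ⁻¹' {b} := by
      intro ω hω
      rw [mem_preimage, mem_singleton_iff, Finset.inf'_apply] at hω
      obtain ⟨i, hi, hmin⟩ := s.exists_mem_eq_inf' hs fun i => g i ω
      exact mem_biUnion hi (hmin.symm.trans hω)
    refine measure_mono_null hsub ((measure_biUnion_null_iff s.countable_toSet).2 fun i hi => ?_)
    have := hnull i hi
    rw [← Measure.map_apply (hg i hi) (measurableSet_singleton b), measure_singleton]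

theorem exists_measure_biUnion_preimage_Iic_eq [IsProbabilityMeasure ν] {ι : Type*}
    {s : Finset ι} (hs : s.Nonempty) {g : ι → α → ℝ} (hg : ∀ i ∈ s, Measurable (g i))
    (hnull : ∀ i ∈ s, NullSingletonClass (ν.map (g i))) {x : ℝ} (hx : x ∈ Ioo (0 : ℝ) 1) :
    ∃ c, ν (⋃ i ∈ s, g i ⁻¹' Iic c) = ENNReal.ofReal x := by
  have hmeas := measurable_finset_inf' hs hg
  have := nullSingletonClass_map_inf' hs hg hnull
  have := Measure.isProbabilityMeasure_map (μ := ν) hmeas.aemeasurable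
  obtain ⟨c, hc⟩ := exists_measure_Iic_eq (ν.map (s.inf' hs g)) hx
  have hsublevel : ⋃ i ∈ s, g i ⁻¹' Iic c = s.inf' hs g ⁻¹' Iic c := by
    ext ω
    simp [Finset.inf'_apply]
  exact ⟨c, by rw [hsublevel, ← Measure.map_apply hmeas measurableSet_Iic, hc]⟩

theorem exists_measurable_injective_real (α : Type*) [MeasurableSpace α]
    [MeasurableSpace.CountablySeparated α] :
    ∃ e : α → ℝ, Measurable e ∧ Function.Injective e := by
  obtain ⟨b, hb, hinj⟩ := MeasurableSpace.measurable_injection_nat_bool_of_countablySeparated α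
  have hι := measurableEmbedding_embeddingReal (ℕ → Bool)
  exact ⟨embeddingReal (ℕ → Bool) ∘ b, hι.measurable.comp hb, hι.injective.comp hinj⟩

end PointMasses

section AlmostInvariance

variable {α : Type*} [MeasurableSpace α] {ν : Measure α} {f : α → α}

theorem measurableSet_hitBy (hf : Measurable f) {C : Set α} (hC : MeasurableSet C) (n : ℕ) :
    MeasurableSet (hitBy f C n) :=
  .biUnion (to_countable _) fun k _ => hf.iterate k hC

theorem measurableSet_firstHitAt (hf : Measurable f) {C : Set α} (hC : MeasurableSet C) (n : ℕ) :
    MeasurableSet (firstHitAt f C n) :=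
  .disjointed (fun k => hf.iterate k hC) n

theorem measure_hitBy (hf : Measurable f) {C : Set α} (hC : MeasurableSet C) (n : ℕ) :
    ν (hitBy f C n) = ∑ k ∈ Finset.range (n + 1), ν (firstHitAt f C k) := by
  have hunion : hitBy f C n = ⋃ k ∈ Finset.range (n + 1), firstHitAt f C k := by
    simp only [hitBy, firstHitAt, biUnion_range_succ_disjointed, partialSups_eq_accumulate]
  have hdisj : Pairwise (Function.onFun Disjoint (firstHitAt f C)) := disjoint_disjointed _
  rw [hunion, measure_biUnion_finset (hdisj.set_pairwise _)
    fun k _ => measurableSet_firstHitAt hf hC k]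

theorem antitone_measure_firstHitAt (hf : MeasurePreserving f ν ν) {C : Set α}
    (hC : MeasurableSet C) : Antitone fun n => ν (firstHitAt f C n) := by
  refine antitone_nat_of_succ_le fun n => ?_
  rw [← hf.measure_preimage (measurableSet_firstHitAt hf.measurable hC n).nullMeasurableSet]
  refine measure_mono fun ω hω => ?_
  rw [mem_firstHitAt] at hω
  exact mem_firstHitAt.2 ⟨hω.1, fun k hk => hω.2 (k + 1) (by lia)⟩

theorem succ_mul_measure_preimage_hitBy_diff_le (hf : MeasurePreserving f ν ν) {C : Set α}
    (hC : MeasurableSet C) (n : ℕ) :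
    (n + 1 : ℕ) * ν (f ⁻¹' hitBy f C n \ hitBy f C n) ≤ ν (hitBy f C n) := by
  calc (n + 1 : ℕ) * ν (f ⁻¹' hitBy f C n \ hitBy f C n)
      ≤ (n + 1 : ℕ) * ν (firstHitAt f C (n + 1)) := by
        gcongr
        exact preimage_hitBy_diff_subset f C n
    _ = ∑ _k ∈ Finset.range (n + 1), ν (firstHitAt f C (n + 1)) := by
        rw [Finset.sum_const, Finset.card_range, nsmul_eq_mul]
    _ ≤ ∑ k ∈ Finset.range (n + 1), ν (firstHitAt f C k) :=
        Finset.sum_le_sum fun k hk =>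
          antitone_measure_firstHitAt hf hC (Finset.mem_range.1 hk).le
    _ = ν (hitBy f C n) := (measure_hitBy hf.measurable hC n).symm

theorem measure_symmDiff_preimage_eq_two_mul [IsFiniteMeasure ν] (hf : MeasurePreserving f ν ν)
    {A : Set α} (hA : MeasurableSet A) : ν (symmDiff A (f ⁻¹' A)) = 2 * ν (f ⁻¹' A \ A) := by
  have hA' := (hf.measurable hA).nullMeasurableSet (μ := ν)
  rw [measure_symmDiff_eq hA.nullMeasurableSet hA', measure_sdiff_symm hA.nullMeasurableSet hA'
    (hf.measure_preimage hA.nullMeasurableSet).symm (measure_ne_top ν _), two_mul]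

theorem succ_mul_measure_symmDiff_preimage_iterate_hitBy_le [IsFiniteMeasure ν]
    (hf : MeasurePreserving f ν ν) {C : Set α} (hC : MeasurableSet C) (m n : ℕ) :
    (m + 1 : ℕ) * ν (symmDiff (hitBy f C m) (f^[n] ⁻¹' hitBy f C m)) ≤
      2 * n * ν (hitBy f C m) := by
  have hA := measurableSet_hitBy hf.measurable hC m
  calc (m + 1 : ℕ) * ν (symmDiff (hitBy f C m) (f^[n] ⁻¹' hitBy f C m))
      ≤ (m + 1 : ℕ) * (n * (2 * ν (f ⁻¹' hitBy f C m \ hitBy f C m))) := by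
        rw [← measure_symmDiff_preimage_eq_two_mul hf hA, ← nsmul_eq_mul n]
        gcongr
        exact hf.measure_symmDiff_preimage_iterate_le hA.nullMeasurableSet n
    _ = 2 * n * ((m + 1 : ℕ) * ν (f ⁻¹' hitBy f C m \ hitBy f C m)) := by ring
    _ ≤ 2 * n * ν (hitBy f C m) := by
        gcongr
        exact succ_mul_measure_preimage_hitBy_diff_le hf hC m

theorem exists_measure_hitBy_eq [MeasurableSpace.CountablySeparated α] [IsProbabilityMeasure ν]
    [NullSingletonClass ν] (hf : MeasurePreserving f ν ν) (n : ℕ) {x : ℝ}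
    (hx : x ∈ Ioo (0 : ℝ) 1) :
    ∃ C, MeasurableSet C ∧ ν (hitBy f C n) = ENNReal.ofReal x := by
  obtain ⟨e, he, hinj⟩ := exists_measurable_injective_real α
  have hnull (k : ℕ) : NullSingletonClass (ν.map (e ∘ f^[k])) := by
    rw [← Measure.map_map he (hf.measurable.iterate k), (hf.iterate k).map_eq]
    exact nullSingletonClass_map_of_injective he hinj
  obtain ⟨c, hc⟩ := exists_measure_biUnion_preimage_Iic_eq Finset.nonempty_Iic
    (fun k _ => he.comp (hf.measurable.iterate k)) (fun k _ => hnull k) hx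
  exact ⟨e ⁻¹' Iic c, he measurableSet_Iic, by
    simpa only [hitBy, accumulate_def, Finset.mem_Iic, preimage_comp] using hc⟩

theorem nullSingletonClass_of_aperiodic [MeasurableSingletonClass α] [IsFiniteMeasure ν]
    (hf : MeasurePreserving f ν ν) (haper : ∀ k : ℕ, k ≠ 0 → ν {ω | f^[k] ω = ω} = 0) :
    NullSingletonClass ν where
  measure_singleton y := by
    by_contra hy
    obtain ⟨y, rfl, k, hk, hreturn⟩ :=
      hf.exists_mem_iterate_mem (measurableSet_singleton y).nullMeasurableSet hy
    have hperiodic : {y} ⊆ {ω | f^[k] ω = ω} := singleton_subset_iff.2 hreturn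
    exact hy (measure_mono_null hperiodic (haper k hk))

end AlmostInvariance

theorem stmt4_general {α : Type*} [MeasurableSpace α] [MeasurableSpace.CountablySeparated α]
    (ν : Measure α) [IsProbabilityMeasure ν] [NullSingletonClass ν]
    {f : α → α} (hf : MeasurePreserving f ν ν) :
    ∀ ε : ℝ, 0 < ε → ∀ N : ℕ, ∀ x : ℝ, x ∈ Set.Ioo (0 : ℝ) 1 →
      ∃ A : Set α, MeasurableSet A ∧ ν A = ENNReal.ofReal x ∧
        ∀ n : ℕ, n ≤ N → ν (symmDiff A (f^[n] ⁻¹' A)) < ENNReal.ofReal ε * ν A := by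
  intro ε hε N x hx
  obtain ⟨m, hm⟩ := exists_nat_gt (2 * N / ε)
  obtain ⟨C, hC, hCx⟩ := exists_measure_hitBy_eq hf m hx
  refine ⟨hitBy f C m, measurableSet_hitBy hf.measurable hC m, hCx, fun n hn => ?_⟩
  have hNm : (2 * N : ENNReal) < (m + 1 : ℕ) * ENNReal.ofReal ε := by
    have h : 2 * N < (m + 1 : ℕ) * ε := (div_lt_iff₀ hε).1 (hm.trans (by simp))
    rw [← ENNReal.ofReal_natCast (m + 1), ← ENNReal.ofReal_mul (by positivity)]
    simpa using (ENNReal.ofReal_lt_ofReal_iff (by positivity)).2 h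
  have hA : ν (hitBy f C m) ≠ 0 := hCx ▸ (ENNReal.ofReal_pos.2 hx.1).ne'
  refine lt_of_mul_lt_mul_left' (a := ((m + 1 : ℕ) : ENNReal)) ?_
  calc (m + 1 : ℕ) * ν (symmDiff (hitBy f C m) (f^[n] ⁻¹' hitBy f C m))
      ≤ 2 * n * ν (hitBy f C m) := succ_mul_measure_symmDiff_preimage_iterate_hitBy_le hf hC m n
    _ ≤ 2 * N * ν (hitBy f C m) := by gcongr
    _ < (m + 1 : ℕ) * ENNReal.ofReal ε * ν (hitBy f C m) :=
        ENNReal.mul_lt_mul_left hA (measure_ne_top ν _) hNm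
    _ = (m + 1 : ℕ) * (ENNReal.ofReal ε * ν (hitBy f C m)) := mul_assoc _ _ _

/-- (del Junco–Rosenblatt) If `S` is an aperiodic invertible measure-preserving
transformation of a standard Borel probability space, then for every `ε > 0`, `N ∈ ℕ` and
`x ∈ (0,1)` there is a measurable set `A` with `ν(A) = x` and `ν(A Δ S^{-n}A) < ε·ν(A)`
for all `0 ≤ n ≤ N`. -/
theorem stmt4 {α : Type*} [MeasurableSpace α] [StandardBorelSpace α]
    (ν : Measure α) [IsProbabilityMeasure ν]
    (S : α ≃ᵐ α) (hS : MeasurePreserving S ν ν)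
    (haper : ∀ k : ℤ, k ≠ 0 → ν {ω | iterZ S k ω = ω} = 0) :
    ∀ ε : ℝ, 0 < ε → ∀ N : ℕ, ∀ x : ℝ, x ∈ Set.Ioo (0 : ℝ) 1 →
      ∃ A : Set α, MeasurableSet A ∧ ν A = ENNReal.ofReal x ∧
        ∀ n : ℕ, n ≤ N → ν (symmDiff A ((⇑S)^[n] ⁻¹' A)) < ENNReal.ofReal ε * ν A := by
  have := nullSingletonClass_of_aperiodic hS fun k hk => haper k (Int.natCast_ne_zero.2 hk)
  exact stmt4_general ν hS
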